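/- arXiv:2507.04728 — 2 statements merged into one kernel-verified Lean document; each statement's English description precedes it below -/
import Mathlib

section
/- Let G~ be a mixed graph whose cycles are pairwise vertex-disjoint and which has no pendant vertices. Suppose G~ has a pendant even cycle C~_q with σ(C~_q) ≡ q (mod 4) and r(G~) = 2m(G) − 2κ(G) + 1. Let x be the unique vertex of degree 3 on C_q and let H~ = G~ − V(C_q) + x. Then r(H~) = 2m(H) − 2κ(H) + 1. -/
open scoped Classical

namespace MixedPaper

universe u

/-- A mixed graph: a finite simple graph together with an orientation of a subset
of its edges.  `arc u v = true` means there is an arc from `u` to `v`. -/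
structure MixedGraph (V : Type u) where
  graph : SimpleGraph V
  arc : V → V → Bool
  arc_adj : ∀ u v, arc u v → graph.Adj u v
  arc_antisymm : ∀ u v, arc u v → ¬ arc v u

variable {V : Type u}

/-- The Hermitian adjacency matrix of a mixed graph. -/
noncomputable def MixedGraph.hMatrix [Fintype V] [DecidableEq V] (M : MixedGraph V) :
    Matrix V V ℂ := fun u v =>
  if M.arc u v then Complex.I
  else if M.arc v u then -Complex.I
  else if M.graph.Adj u v then 1 else 0

/-- The H-rank of a mixed graph: the rank of its Hermitian adjacency matrix. -/
noncomputable def MixedGraph.hRank [Fintype V] [DecidableEq V] (M : MixedGraph V) : ℕ :=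
  M.hMatrix.rank

/-- The matching number of a simple graph. -/
noncomputable def matchingNumber (G : SimpleGraph V) : ℕ :=
  sSup {k | ∃ N : G.Subgraph, N.IsMatching ∧ N.edgeSet.ncard = k}

/-- A subgraph is a cycle subgraph if it is connected and every one of its vertices
has exactly two neighbours in it. -/
def IsCycleSubgraph {G : SimpleGraph V} (C : G.Subgraph) : Prop :=
  C.Connected ∧ ∀ v ∈ C.verts, {w | C.Adj v w}.ncard = 2

/-- κ(G) : the number of even cycles of G. -/
noncomputable def evenCycleCount (G : SimpleGraph V) : ℕ :=
  {C : G.Subgraph | IsCycleSubgraph C ∧ Even C.verts.ncard}.ncard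

/-- c(G) = |E(G)| - |V(G)| + ω(G), the cyclomatic number. -/
noncomputable def cyclomatic [Fintype V] (G : SimpleGraph V) : ℤ :=
  (G.edgeSet.ncard : ℤ) - (Fintype.card V : ℤ) + (Nat.card G.ConnectedComponent : ℤ)

/-- The induced mixed subgraph on a set of vertices. -/
def MixedGraph.induce (M : MixedGraph V) (S : Set V) : MixedGraph S where
  graph := M.graph.induce S
  arc := fun a b => M.arc a.1 b.1
  arc_adj := fun a b h => M.arc_adj a.1 b.1 h
  arc_antisymm := fun a b h => M.arc_antisymm a.1 b.1 h

/-- The mixed subgraph induced by a connected component of the underlying graph. -/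
def MixedGraph.comp (M : MixedGraph V) (c : M.graph.ConnectedComponent) :
    MixedGraph c.supp := M.induce c.supp

/-- The signature |f - b| of a closed walk in a mixed graph: the absolute difference
between the numbers of forward and backward arcs along the walk. -/
def walkSignature (M : MixedGraph V) {u : V} (w : M.graph.Walk u u) : ℕ :=
  ((w.darts.countP fun d => M.arc d.toProd.1 d.toProd.2 : ℤ) -
    (w.darts.countP fun d => M.arc d.toProd.2 d.toProd.1 : ℤ)).natAbs

/-- The signature of the cycle subgraph `C` of the mixed graph `M` satisfies the
predicate `P` (expressed via a closed walk traversing `C`; the signature does not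
depend on the choice of traversal). -/
def CycleSig (M : MixedGraph V) (C : M.graph.Subgraph) (P : ℕ → Prop) : Prop :=
  ∃ (u : V) (w : M.graph.Walk u u), w.IsCycle ∧
    {v | v ∈ w.support} = C.verts ∧ {e | e ∈ w.edges} = C.edgeSet ∧
    P (walkSignature M w)

/-- `C` is a pendant cycle with unique vertex `x` of degree 3. -/
def IsPendantCycle (G : SimpleGraph V) (C : G.Subgraph) (x : V) : Prop :=
  IsCycleSubgraph C ∧ x ∈ C.verts ∧ {w | G.Adj x w}.ncard = 3 ∧
    ∀ v ∈ C.verts, v ≠ x → {w | G.Adj v w}.ncard = 2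

/-- G has no pendant vertices (vertices of degree 1). -/
def NoPendantVerts (G : SimpleGraph V) : Prop := ∀ u : V, {w | G.Adj u w}.ncard ≠ 1

/-- The (distinct) cycles of G are pairwise vertex-disjoint. -/
def CyclesVertexDisjoint (G : SimpleGraph V) : Prop :=
  ∀ C₁ C₂ : G.Subgraph, IsCycleSubgraph C₁ → IsCycleSubgraph C₂ → C₁ ≠ C₂ →
    Disjoint C₁.verts C₂.verts

/-- The (distinct) even cycles of G are pairwise vertex-disjoint. -/
def EvenCyclesVertexDisjoint (G : SimpleGraph V) : Prop :=
  ∀ C₁ C₂ : G.Subgraph, IsCycleSubgraph C₁ → IsCycleSubgraph C₂ →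
    Even C₁.verts.ncard → Even C₂.verts.ncard → C₁ ≠ C₂ →
    Disjoint C₁.verts C₂.verts

/-- One pendant `K₂` deletion step, recorded on the surviving vertex sets:
`u` is pendant in the graph induced on `S` with unique neighbour `v` there,
and both are deleted. -/
def PendantStep (G : SimpleGraph V) (S T : Set V) : Prop :=
  ∃ u v, u ∈ S ∧ v ∈ S ∧ {w | w ∈ S ∧ G.Adj u w} = {v} ∧ T = S \ {u, v}

/-- `S` is reachable from the full vertex set by a sequence of pendant K₂ deletions. -/
def PendantReaches (G : SimpleGraph V) (S : Set V) : Prop :=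
  Relation.ReflTransGen (PendantStep G) Set.univ S

/-- The graph induced on `S` has no pendant vertices. -/
def NoPendantIn (G : SimpleGraph V) (S : Set V) : Prop :=
  ∀ u ∈ S, {w | w ∈ S ∧ G.Adj u w}.ncard ≠ 1

/-- `u` lies on some even cycle of `G`. -/
def OnEvenCycle (G : SimpleGraph V) (u : V) : Prop :=
  ∃ C : G.Subgraph, IsCycleSubgraph C ∧ Even C.verts.ncard ∧ u ∈ C.verts

/-- G is the graph ∞(p,1,q): two cycles of lengths p and q sharing exactly one vertex. -/
def IsInfinityGraph (G : SimpleGraph V) (p q : ℕ) : Prop :=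
  ∃ C₁ C₂ : G.Subgraph, IsCycleSubgraph C₁ ∧ IsCycleSubgraph C₂ ∧
    C₁.verts.ncard = p ∧ C₂.verts.ncard = q ∧
    (C₁.verts ∩ C₂.verts).ncard = 1 ∧ C₁ ⊔ C₂ = ⊤

/-- G is the theta graph θ(p,l,q): three internally disjoint paths with p, l, q
vertices respectively, joining two common endvertices. -/
def IsThetaGraph (G : SimpleGraph V) (p l q : ℕ) : Prop :=
  2 ≤ p ∧ 2 ≤ l ∧ 2 ≤ q ∧ ¬(p = 2 ∧ l = 2) ∧ ¬(p = 2 ∧ q = 2) ∧ ¬(l = 2 ∧ q = 2) ∧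
  ∃ (a b : V) (W₁ W₂ W₃ : G.Walk a b), W₁.IsPath ∧ W₂.IsPath ∧ W₃.IsPath ∧
    W₁.length = p - 1 ∧ W₂.length = l - 1 ∧ W₃.length = q - 1 ∧
    (∀ v : V, v ∈ W₁.support ∨ v ∈ W₂.support ∨ v ∈ W₃.support) ∧
    (∀ e ∈ G.edgeSet, e ∈ W₁.edges ∨ e ∈ W₂.edges ∨ e ∈ W₃.edges) ∧
    {v | v ∈ W₁.support ∧ v ∈ W₂.support} = {a, b} ∧
    {v | v ∈ W₁.support ∧ v ∈ W₃.support} = {a, b} ∧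
    {v | v ∈ W₂.support ∧ v ∈ W₃.support} = {a, b}

/-- Every odd cycle of `M` has signature satisfying `P`. -/
def OddCyclesSig (M : MixedGraph V) (P : ℕ → Prop) : Prop :=
  ∀ C : M.graph.Subgraph, IsCycleSubgraph C → Odd C.verts.ncard → CycleSig M C P

/-- Every even cycle of `M`, of length `n`, has signature `s` satisfying `P n s`. -/
def EvenCyclesSig (M : MixedGraph V) (P : ℕ → ℕ → Prop) : Prop :=
  ∀ C : M.graph.Subgraph, IsCycleSubgraph C → Even C.verts.ncard →
    CycleSig M C (P C.verts.ncard)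

/-- The whole mixed graph is a single cycle. -/
def IsCycleMG (M : MixedGraph V) : Prop := IsCycleSubgraph (⊤ : M.graph.Subgraph)

/-- The family 𝔊₀. -/
def MemG0 [Fintype V] [DecidableEq V] (M : MixedGraph V) : Prop :=
  M.graph.Connected ∧ 1 ≤ cyclomatic M.graph ∧ CyclesVertexDisjoint M.graph ∧
  NoPendantVerts M.graph ∧
  ∃ (C : M.graph.Subgraph) (x : V), IsPendantCycle M.graph C x ∧ Odd C.verts.ncard ∧
    CycleSig M C Odd ∧
    ((M.induce (C.vertsᶜ ∪ {x})).hRank : ℤ) =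
      2 * (matchingNumber (M.induce (C.vertsᶜ ∪ {x})).graph : ℤ) -
        2 * cyclomatic (M.induce (C.vertsᶜ ∪ {x})).graph

/-- The family 𝔛₁ : mixed ∞(p,1,q)-graphs, p even, q odd, whose odd cycle has odd
signature and whose even cycle C̃_p satisfies σ ≡ p (mod 4). -/
def MemX1 (M : MixedGraph V) : Prop :=
  ∃ p q : ℕ, Even p ∧ Odd q ∧ IsInfinityGraph M.graph p q ∧
    OddCyclesSig M Odd ∧ EvenCyclesSig M (fun n s => s % 4 = n % 4)

/-- The family 𝔛₂ : mixed θ(p,l,q)-graphs, p even, l q odd, whose two odd cycles have odd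
signatures and whose even cycle C̃_{q+l-2} satisfies q + l + σ ≡ 2 (mod 4). -/
def MemX2 (M : MixedGraph V) : Prop :=
  ∃ p l q : ℕ, Even p ∧ Odd l ∧ Odd q ∧ IsThetaGraph M.graph p l q ∧
    OddCyclesSig M Odd ∧ EvenCyclesSig M (fun _ s => (q + l + s) % 4 = 2)

/-- The family 𝔊₂ = 𝔊₀ ∪ 𝔛₁ ∪ 𝔛₂ together with the mixed odd cycles of odd signature. -/
def MemG2 [Fintype V] [DecidableEq V] (M : MixedGraph V) : Prop :=
  MemG0 M ∨ MemX1 M ∨ MemX2 M ∨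
    (IsCycleMG M ∧ Odd (Nat.card V) ∧ CycleSig M ⊤ Odd)

/-- The family 𝔜₁. -/
def MemY1 (M : MixedGraph V) : Prop :=
  ∃ p q : ℕ, Even p ∧ Odd q ∧ IsInfinityGraph M.graph p q ∧
    OddCyclesSig M Even ∧ EvenCyclesSig M (fun n s => s % 4 = n % 4)

/-- The family 𝔜₂. -/
def MemY2 (M : MixedGraph V) : Prop :=
  ∃ p l q : ℕ, Even p ∧ Odd l ∧ Odd q ∧ IsThetaGraph M.graph p l q ∧
    OddCyclesSig M Even ∧ EvenCyclesSig M (fun _ s => (q + l + s) % 4 = 2)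

/-- `M` is a disjoint union of `k` even cycles and one odd cycle with even signature. -/
def IsDisjointUnionEvenCyclesOddCycleEvenSig (M : MixedGraph V) (k : ℤ) : Prop :=
  (∀ c : M.graph.ConnectedComponent, IsCycleMG (M.comp c)) ∧
  (({c : M.graph.ConnectedComponent | Even (Nat.card c.supp)}.ncard : ℤ) = k) ∧
  (∃! c : M.graph.ConnectedComponent, Odd (Nat.card c.supp)) ∧
  (∀ c : M.graph.ConnectedComponent, Odd (Nat.card c.supp) →
    CycleSig (M.comp c) ⊤ Even)

/-- The family 𝔉₀. -/
def MemF0 [Fintype V] [DecidableEq V] (M : MixedGraph V) : Prop :=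
  M.graph.Connected ∧ 2 ≤ cyclomatic M.graph ∧ CyclesVertexDisjoint M.graph ∧
  NoPendantVerts M.graph ∧
  (∃ (C₀ : M.graph.Subgraph) (x₀ : V), IsPendantCycle M.graph C₀ x₀ ∧ Odd C₀.verts.ncard ∧
    CycleSig M C₀ Even ∧
    ∀ C : M.graph.Subgraph, IsCycleSubgraph C → C ≠ C₀ →
      Even C.verts.ncard ∧ CycleSig M C (fun s => s % 4 = C.verts.ncard % 4)) ∧
  (∃ (Cq : M.graph.Subgraph) (x : V), IsPendantCycle M.graph Cq x ∧ Even Cq.verts.ncard ∧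
    ∃ S : Set ↥(Cq.vertsᶜ ∪ {x}),
      PendantReaches (M.induce (Cq.vertsᶜ ∪ {x})).graph S ∧
      NoPendantIn (M.induce (Cq.vertsᶜ ∪ {x})).graph S ∧
      IsDisjointUnionEvenCyclesOddCycleEvenSig
        ((M.induce (Cq.vertsᶜ ∪ {x})).induce S)
        (cyclomatic (M.induce (Cq.vertsᶜ ∪ {x})).graph))

/-- The family 𝔉₂ = 𝔉₀ ∪ 𝔜₁ ∪ 𝔜₂ together with the mixed odd cycles of even signature. -/
def MemF2 [Fintype V] [DecidableEq V] (M : MixedGraph V) : Prop :=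
  MemF0 M ∨ MemY1 M ∨ MemY2 M ∨
    (IsCycleMG M ∧ Odd (Nat.card V) ∧ CycleSig M ⊤ Even)

/-- A connected component that is either an even cycle C̃_q with σ ≡ q (mod 4),
or an isolated vertex. -/
def GoodOtherComp (M : MixedGraph V) : Prop :=
  (IsCycleMG M ∧ Even (Nat.card V) ∧
    CycleSig M ⊤ (fun s => s % 4 = (Nat.card V) % 4)) ∨
  Nat.card V = 1

/-- A fractional matching of `G`, given as a weight function on `Sym2 V` vanishing
outside the edge set. -/
def IsFracMatching [Fintype V] [DecidableEq V] (G : SimpleGraph V) (f : Sym2 V → ℝ) : Prop :=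
  (∀ e ∈ G.edgeSet, 0 ≤ f e ∧ f e ≤ 1) ∧ (∀ e, e ∉ G.edgeSet → f e = 0) ∧
    ∀ v : V, ∑ e ∈ Finset.univ.filter (fun e : Sym2 V => v ∈ e), f e ≤ 1

/-- The fractional matching number m*(G). -/
noncomputable def fracMatchingNumber [Fintype V] [DecidableEq V] (G : SimpleGraph V) : ℝ :=
  sSup {x : ℝ | ∃ f : Sym2 V → ℝ, IsFracMatching G f ∧ ∑ e : Sym2 V, f e = x}

/-- Membership in the family ℱ : fractional matchings of total weight m*(G) taking
values in {0, 1/2, 1}. -/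
def InOptFamily [Fintype V] [DecidableEq V] (G : SimpleGraph V) (f : Sym2 V → ℝ) : Prop :=
  IsFracMatching G f ∧ (∑ e : Sym2 V, f e) = fracMatchingNumber G ∧
    ∀ e : Sym2 V, f e = 0 ∨ f e = 1 / 2 ∨ f e = 1

/-- An optimal fractional matching: a member of ℱ with the largest number of
edges of weight 1. -/
def IsOptFracMatching [Fintype V] [DecidableEq V] (G : SimpleGraph V) (f : Sym2 V → ℝ) : Prop :=
  InOptFamily G f ∧
    ∀ g : Sym2 V → ℝ, InOptFamily G g →
      {e : Sym2 V | g e = 1}.ncard ≤ {e : Sym2 V | f e = 1}.ncard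

/-- E₁(C) : the edges of `G` with exactly one endpoint on the cycle `C`. -/
def cutEdges (G : SimpleGraph V) (C : G.Subgraph) : Set (Sym2 V) :=
  {e | e ∈ G.edgeSet ∧ ∃ a b : V, e = s(a, b) ∧ a ∈ C.verts ∧ b ∉ C.verts}

/-! Rescaling the coordinates by a diagonal matrix turns the weights along the cycle into `i`
forwards and `-i` backwards; the signature condition is what lets this rescaling close up. Kernel
vectors of the rescaled matrix are then 2-periodic along the cycle, whence
`r(G) = q - 2 + r(H)`. Since also `κ(G) = κ(H) + 1` and `2 m(G) ≤ 2 m(H) + q`, the assumption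
on `r(G)` gives `r(H) ≤ 2 m(H) - 2 κ(H) + 1`.

Conversely `r(H) ≥ 2 m(H) - 2 κ(H)`: from the vertices covered by a maximum matching, remove one
vertex of every even cycle together with its partner. The remaining subgraph has no even cycle, so
its perfect matching is unique, and modulo the prime `1 + i` the determinant counts perfect
matchings modulo 2; hence it is nonzero. Equality is excluded by parity, because
`r(H) ≡ r(G) ≡ 1 (mod 2)`. -/

section Cycles

variable {W : Type*} {G : SimpleGraph V} {G' : SimpleGraph W}

theorem IsCycleSubgraph.finite_neighborSet {C : G.Subgraph} (hC : IsCycleSubgraph C) {v : V}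
    (hv : v ∈ C.verts) : (C.neighborSet v).Finite :=
  Set.finite_of_ncard_ne_zero (by rw [show (C.neighborSet v).ncard = 2 from hC.2 v hv]; decide)

theorem IsCycleSubgraph.eq_of_le {C D : G.Subgraph} (hC : IsCycleSubgraph C)
    (hD : IsCycleSubgraph D) (hle : C ≤ D) : C = D := by
  have hnbr : ∀ v ∈ C.verts, C.neighborSet v = D.neighborSet v := fun v hv ↦
    Set.eq_of_subset_of_ncard_le (fun _ h ↦ hle.2 h)
      ((hD.2 v (hle.1 hv)).trans (hC.2 v hv).symm).le (hD.finite_neighborSet (hle.1 hv))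
  obtain ⟨v, hv⟩ := hC.1.nonempty
  have hverts : D.verts ⊆ C.verts := by
    intro u hu
    by_contra huC
    obtain ⟨p⟩ := hD.1.preconnected ⟨v, hle.1 hv⟩ ⟨u, hu⟩
    obtain ⟨d, -, hd, hd'⟩ := p.exists_boundary_dart (Subtype.val ⁻¹' C.verts) hv huC
    have hadj : (d.snd : V) ∈ C.neighborSet d.fst := by rw [hnbr _ hd]; exact d.adj
    exact hd' (C.edge_vert (C.adj_symm hadj))
  refine le_antisymm hle ⟨hverts, fun a b hab ↦ ?_⟩
  have hb : b ∈ D.neighborSet a := hab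
  rwa [← hnbr a (hverts (D.edge_vert hab))] at hb

theorem isCycleSubgraph_toSubgraph {u : V} {w : G.Walk u u} (hw : w.IsCycle) :
    IsCycleSubgraph w.toSubgraph :=
  ⟨w.toSubgraph_connected, fun _ hv ↦
    hw.ncard_neighborSet_toSubgraph_eq_two (w.mem_verts_toSubgraph.1 hv)⟩

theorem ncard_verts_toSubgraph {u : V} {w : G.Walk u u} (hw : w.IsCycle) :
    w.toSubgraph.verts.ncard = w.length := by
  have hverts : w.toSubgraph.verts = w.support.tail.toFinset := by
    ext v
    rw [w.mem_verts_toSubgraph, w.mem_support_iff, List.coe_toFinset, Set.mem_ofPred_eq]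
    exact or_iff_right_of_imp fun h ↦ h ▸ w.end_mem_tail_support hw.not_nil
  rw [hverts, Set.ncard_coe_finset, List.toFinset_card_of_nodup hw.support_nodup]
  simp

theorem connected_map_iff (f : G ↪g G') (C : G.Subgraph) :
    (C.map f.toHom).Connected ↔ C.Connected := by
  let e : C.coe ≃g (C.map f.toHom).coe :=
    ⟨Equiv.Set.image f C.verts f.injective, fun {a b} ↦ by
      exact Relation.map_apply_apply f.injective f.injective C.Adj a b⟩
  rw [SimpleGraph.Subgraph.connected_iff', SimpleGraph.Subgraph.connected_iff', e.connected_iff]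

theorem isCycleSubgraph_map_iff (f : G ↪g G') (C : G.Subgraph) :
    IsCycleSubgraph (C.map f.toHom) ↔ IsCycleSubgraph C := by
  have hnbr : ∀ v, (C.map f.toHom).neighborSet (f v) = f '' C.neighborSet v := by
    intro v
    ext b
    constructor
    · rintro ⟨a, c, hac, hav, rfl⟩
      exact ⟨c, f.injective hav ▸ hac, rfl⟩
    · rintro ⟨c, hc, rfl⟩
      exact ⟨v, c, hc, rfl, rfl⟩
  refine and_congr (connected_map_iff f C) (Set.forall_mem_image.trans ?_)
  refine forall₂_congr fun v _ ↦ ?_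
  change ((C.map f.toHom).neighborSet (f v)).ncard = 2 ↔ _
  rw [hnbr, Set.ncard_image_of_injective _ f.injective]
  rfl

theorem ncard_verts_map (f : G ↪g G') (C : G.Subgraph) :
    (C.map f.toHom).verts.ncard = C.verts.ncard :=
  Set.ncard_image_of_injective _ f.injective

theorem exists_map_induce_eq {S : Set V} {D : G.Subgraph} (hD : D.verts ⊆ S) :
    ∃ D' : (G.induce S).Subgraph, D'.map (SimpleGraph.Embedding.induce S).toHom = D := by
  refine ⟨D.comap (SimpleGraph.Embedding.induce S).toHom, SimpleGraph.Subgraph.ext ?_ ?_⟩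
  · exact (Subtype.image_preimage_val S D.verts).trans (Set.inter_eq_right.2 hD)
  · ext a b
    constructor
    · rintro ⟨a, b, ⟨-, hab⟩, rfl, rfl⟩
      exact hab
    · intro hab
      exact ⟨⟨a, hD (D.edge_vert hab)⟩, ⟨b, hD (D.edge_vert hab.symm)⟩,
        ⟨D.adj_sub hab, hab⟩, rfl, rfl⟩

theorem subgraph_map_injective (f : G ↪g G') :
    Function.Injective (SimpleGraph.Subgraph.map f.toHom) := by
  refine Function.LeftInverse.injective (g := SimpleGraph.Subgraph.comap f.toHom) fun C ↦
    SimpleGraph.Subgraph.ext (Set.preimage_image_eq _ f.injective) ?_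
  ext a b
  refine (and_congr_right' ?_).trans (and_iff_right_of_imp C.adj_sub)
  exact Relation.map_apply_apply f.injective f.injective C.Adj a b

end Cycles

section HangingCycle

/-- A cycle based at `x` that is attached to the rest of the graph at `x` only: a pendant cycle
whose attaching vertex `x` may have any degree. -/
structure IsHangingCycle {G : SimpleGraph V} {x : V} (w : G.Walk x x) : Prop where
  isCycle : w.IsCycle
  ncard_neighborSet : ∀ v ∈ w.toSubgraph.verts, v ≠ x → (G.neighborSet v).ncard = 2

/-- The vertices of the graph obtained by deleting a hanging cycle except for its base point. -/
abbrev remainder {G : SimpleGraph V} {x : V} (w : G.Walk x x) : Set V :=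
  w.toSubgraph.vertsᶜ ∪ {x}

variable {G : SimpleGraph V} {x : V} {w : G.Walk x x}

theorem base_mem_remainder : x ∈ remainder w := Or.inr rfl

theorem mem_verts_of_notMem_remainder {v : V} (hv : v ∉ remainder w) :
    v ∈ w.toSubgraph.verts := by
  by_contra h
  exact hv (Or.inl h)

theorem ne_base_of_notMem_remainder {v : V} (hv : v ∉ remainder w) : v ≠ x :=
  fun h ↦ hv (Or.inr h)

theorem getVert_notMem_remainder (hw : w.IsCycle) {i : ℕ} (hi : 0 < i) (hiq : i < w.length) :
    w.getVert i ∉ remainder w := by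
  rintro (h | h)
  · exact h (w.mem_verts_toSubgraph.2 (w.getVert_mem_support i))
  · rcases (hw.getVert_endpoint_iff hiq.le).1 h with h | h <;> omega

theorem exists_getVert_eq_of_notMem_remainder {v : V} (hv : v ∉ remainder w) :
    ∃ i, 0 < i ∧ i < w.length ∧ w.getVert i = v := by
  obtain ⟨i, rfl, hi⟩ := SimpleGraph.Walk.mem_support_iff_exists_getVert.1
    (w.mem_verts_toSubgraph.1 (mem_verts_of_notMem_remainder hv))
  refine ⟨i, Nat.pos_of_ne_zero ?_, lt_of_le_of_ne hi ?_, rfl⟩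
  · rintro rfl
    exact ne_base_of_notMem_remainder hv w.getVert_zero
  · rintro rfl
    exact ne_base_of_notMem_remainder hv w.getVert_length

namespace IsHangingCycle

theorem neighborSet_eq (hw : IsHangingCycle w) {D : G.Subgraph} (hD : IsCycleSubgraph D) {v : V}
    (hv : v ∉ remainder w) (hvD : v ∈ D.verts) : D.neighborSet v = G.neighborSet v := by
  have hG := hw.ncard_neighborSet v (mem_verts_of_notMem_remainder hv)
    (ne_base_of_notMem_remainder hv)
  exact Set.eq_of_subset_of_ncard_le (D.neighborSet_subset v) (hG.trans (hD.2 v hvD).symm).le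
    (Set.finite_of_ncard_ne_zero (by rw [hG]; decide))

theorem neighborSet_getVert (hw : IsHangingCycle w) {i : ℕ} (hi : 0 < i) (hiq : i < w.length) :
    G.neighborSet (w.getVert i) = {w.getVert (i - 1), w.getVert (i + 1)} := by
  have hv := getVert_notMem_remainder hw.isCycle hi hiq
  rw [← hw.neighborSet_eq (isCycleSubgraph_toSubgraph hw.isCycle) hv
    (mem_verts_of_notMem_remainder hv)]
  exact hw.isCycle.neighborSet_toSubgraph_internal hi.ne' hiq

theorem toSubgraph_adj_or_mem_remainder (hw : IsHangingCycle w) {a b : V} (hab : G.Adj a b) :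
    w.toSubgraph.Adj a b ∨ a ∈ remainder w ∧ b ∈ remainder w := by
  have key : ∀ {a b}, G.Adj a b → a ∉ remainder w → w.toSubgraph.Adj a b := by
    intro a b hab ha
    have hb : b ∈ G.neighborSet a := hab
    rwa [← hw.neighborSet_eq (isCycleSubgraph_toSubgraph hw.isCycle) ha
      (mem_verts_of_notMem_remainder ha)] at hb
  by_cases ha : a ∈ remainder w
  · by_cases hb : b ∈ remainder w
    · exact Or.inr ⟨ha, hb⟩
    · exact Or.inl (key hab.symm hb).symm
  · exact Or.inl (key hab ha)

theorem adj_getVert (hw : IsHangingCycle w) {D : G.Subgraph} (hD : IsCycleSubgraph D) {i : ℕ}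
    (hi : 0 < i) (hiq : i < w.length) (hiD : w.getVert i ∈ D.verts) :
    D.Adj (w.getVert i) (w.getVert (i - 1)) ∧ D.Adj (w.getVert i) (w.getVert (i + 1)) := by
  have hnbr := (hw.neighborSet_eq hD (getVert_notMem_remainder hw.isCycle hi hiq) hiD).trans
    (hw.neighborSet_getVert hi hiq)
  exact ⟨hnbr.ge (Or.inl rfl), hnbr.ge (Or.inr rfl)⟩

theorem getVert_mem_verts_iff (hw : IsHangingCycle w) {D : G.Subgraph} (hD : IsCycleSubgraph D)
    {i : ℕ} (hi : 0 < i) (hiq : i < w.length) :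
    w.getVert i ∈ D.verts ↔ w.getVert 1 ∈ D.verts := by
  induction i, hi using Nat.le_induction with
  | base => rfl
  | succ i hi ih =>
    refine Iff.trans ⟨fun h ↦ ?_, fun h ↦ ?_⟩ (ih (by omega))
    · exact D.edge_vert (hw.adj_getVert hD i.succ_pos hiq h).1.symm
    · exact D.edge_vert (hw.adj_getVert hD hi (by omega) h).2.symm

theorem eq_toSubgraph_of_not_subset (hw : IsHangingCycle w) {D : G.Subgraph}
    (hD : IsCycleSubgraph D) (hDw : ¬ D.verts ⊆ remainder w) : D = w.toSubgraph := by
  obtain ⟨v, hvD, hv⟩ := Set.not_subset.1 hDw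
  obtain ⟨k, hk, hkq, rfl⟩ := exists_getVert_eq_of_notMem_remainder hv
  have hmem : ∀ {i}, 0 < i → i < w.length → w.getVert i ∈ D.verts := fun hi hiq ↦
    (hw.getVert_mem_verts_iff hD hi hiq).2 ((hw.getVert_mem_verts_iff hD hk hkq).1 hvD)
  have hle : w.toSubgraph ≤ D := by
    rw [SimpleGraph.Walk.toSubgraph_le_iff hw.isCycle.not_nil, ← w.edgeSet_toSubgraph]
    rintro ⟨a, b⟩ hab
    obtain ⟨i, hi, hiq⟩ := w.toSubgraph_adj_iff.1 hab
    change s(a, b) ∈ D.edgeSet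
    rw [← hi]
    rcases i.eq_zero_or_pos with rfl | hi
    · have hlen := hw.isCycle.three_le_length
      exact (hw.adj_getVert hD one_pos (by omega) (hmem one_pos (by omega))).1.symm
    · exact (hw.adj_getVert hD hi hiq (hmem hi hiq)).2
  exact ((isCycleSubgraph_toSubgraph hw.isCycle).eq_of_le hD hle).symm

theorem evenCycleCount_eq [Finite V] (hw : IsHangingCycle w) (heven : Even w.length) :
    evenCycleCount G = evenCycleCount (G.induce (remainder w)) + 1 := by
  let f := SimpleGraph.Embedding.induce (G := G) (remainder w)
  have himage : {D : G.Subgraph | IsCycleSubgraph D ∧ Even D.verts.ncard} =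
      insert w.toSubgraph (SimpleGraph.Subgraph.map f.toHom ''
        {D | IsCycleSubgraph D ∧ Even D.verts.ncard}) := by
    ext D
    constructor
    · rintro ⟨hD, hDeven⟩
      by_cases hDw : D.verts ⊆ remainder w
      · obtain ⟨D', rfl⟩ := exists_map_induce_eq hDw
        exact Or.inr ⟨D', ⟨(isCycleSubgraph_map_iff f D').1 hD, ncard_verts_map f D' ▸ hDeven⟩, rfl⟩
      · exact Or.inl (hw.eq_toSubgraph_of_not_subset hD hDw)
    · rintro (rfl | ⟨D', ⟨hD', hDeven⟩, rfl⟩)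
      · exact ⟨isCycleSubgraph_toSubgraph hw.isCycle,
          (ncard_verts_toSubgraph hw.isCycle).symm ▸ heven⟩
      · exact ⟨(isCycleSubgraph_map_iff f D').2 hD', (ncard_verts_map f D').symm ▸ hDeven⟩
  have hnot : w.toSubgraph ∉ SimpleGraph.Subgraph.map f.toHom ''
      {D | IsCycleSubgraph D ∧ Even D.verts.ncard} := by
    rintro ⟨D', -, hD'⟩
    have hlen := hw.isCycle.three_le_length
    have hmem : w.getVert 1 ∈ (D'.map f.toHom).verts :=
      hD' ▸ w.mem_verts_toSubgraph.2 (w.getVert_mem_support 1)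
    obtain ⟨v, -, hv⟩ := hmem
    exact getVert_notMem_remainder hw.isCycle one_pos (by omega) (hv ▸ v.2)
  rw [evenCycleCount, himage, Set.ncard_insert_of_notMem hnot (Set.toFinite _),
    Set.ncard_image_of_injective _ (subgraph_map_injective f)]
  rfl

end IsHangingCycle

end HangingCycle

section Matching

/-- A matching of `G` encoded as the involution that swaps the two ends of each of its edges and
fixes the unmatched vertices. -/
structure IsMatchingInvolution (G : SimpleGraph V) (σ : V → V) : Prop where
  involutive : Function.Involutive σ
  adj_of_ne : ∀ v, σ v ≠ v → G.Adj v (σ v)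

/-- The restriction of an involution `σ` to `S`, where the points that `σ` moves out of `S` become
fixed points. -/
noncomputable def restrictInvolution (σ : V → V) (S : Set V) (v : S) : S :=
  if h : σ v ∈ S then ⟨σ v, h⟩ else v

variable {G : SimpleGraph V}

theorem two_mul_ncard_edgeSet [Finite V] {N : G.Subgraph} (hN : N.IsMatching) :
    2 * N.edgeSet.ncard = N.verts.ncard := by
  have := Fintype.ofFinite V
  have hdeg (v : N.verts) [Fintype (N.coe.neighborSet v)] : N.coe.degree v = 1 := by
    rw [SimpleGraph.Subgraph.coe_degree]
    convert SimpleGraph.Subgraph.isMatching_iff_forall_degree.1 hN v v.2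
  have hsum : N.verts.ncard = 2 * N.coe.edgeFinset.card := by
    rw [← SimpleGraph.sum_degrees_eq_twice_card_edges]
    simp only [hdeg, Finset.sum_const, smul_eq_mul, mul_one, Finset.card_univ]
    rw [← Nat.card_eq_fintype_card, Nat.card_coe_set_eq]
  rw [hsum, ← N.image_coe_edgeSet_coe,
    Set.ncard_image_of_injective _ (Sym2.map.injective Subtype.val_injective),
    ← SimpleGraph.coe_edgeFinset, Set.ncard_coe_finset]

theorem bddAbove_ncard_edgeSet [Finite V] (G : SimpleGraph V) :
    BddAbove {k | ∃ N : G.Subgraph, N.IsMatching ∧ N.edgeSet.ncard = k} := by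
  refine Set.Finite.bddAbove ?_
  exact (Set.toFinite {N : G.Subgraph | N.IsMatching}).image fun N ↦ N.edgeSet.ncard

namespace IsMatchingInvolution

variable {σ : V → V}

theorem exists_isMatching (hσ : IsMatchingInvolution G σ) :
    ∃ N : G.Subgraph, N.IsMatching ∧ N.verts = {v | σ v ≠ v} := by
  refine ⟨⟨{v | σ v ≠ v}, fun a b ↦ σ a = b ∧ a ≠ b, ?_, ?_, ?_⟩, ?_, rfl⟩
  · rintro a b ⟨rfl, hne⟩
    exact hσ.adj_of_ne a hne.symm
  · rintro a b ⟨rfl, hne⟩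
    exact hne.symm
  · exact ⟨fun a b ⟨h, hne⟩ ↦ ⟨(hσ.involutive.eq_iff.1 h).symm, hne.symm⟩⟩
  · exact fun v hv ↦ ⟨σ v, ⟨rfl, Ne.symm hv⟩, fun b hb ↦ hb.1.symm⟩

theorem ncard_le [Finite V] (hσ : IsMatchingInvolution G σ) :
    {v | σ v ≠ v}.ncard ≤ 2 * matchingNumber G := by
  obtain ⟨N, hN, hverts⟩ := hσ.exists_isMatching
  rw [← hverts, ← two_mul_ncard_edgeSet hN]
  exact Nat.mul_le_mul_left 2 (le_csSup (bddAbove_ncard_edgeSet G) ⟨N, hN, rfl⟩)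

theorem induce (hσ : IsMatchingInvolution G σ) (S : Set V) :
    IsMatchingInvolution (G.induce S) (restrictInvolution σ S) where
  involutive v := by
    by_cases h : σ v ∈ S <;> simp [restrictInvolution, h, hσ.involutive (v : V)]
  adj_of_ne v hv := by
    by_cases h : σ v ∈ S
    · simp only [restrictInvolution, h, dif_pos, ne_eq, Subtype.ext_iff] at hv ⊢
      exact hσ.adj_of_ne v hv
    · simp [restrictInvolution, h] at hv

end IsMatchingInvolution

theorem exists_isMatchingInvolution_of_isMatching {N : G.Subgraph} (hN : N.IsMatching) :
    ∃ σ, IsMatchingInvolution G σ ∧ {v | σ v ≠ v} = N.verts := by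
  have hex (v : V) : ∃ b, v ∈ N.verts → N.Adj v b ∧ ∀ c, N.Adj v c → c = b := by
    by_cases hv : v ∈ N.verts
    · exact (hN hv).imp fun _ hb _ ↦ hb
    · exact ⟨v, fun h ↦ absurd h hv⟩
  choose τ hτ using hex
  have hmem {v} (hv : v ∈ N.verts) : τ v ∈ N.verts := N.edge_vert (hτ v hv).1.symm
  refine ⟨fun v ↦ if v ∈ N.verts then τ v else v, ⟨fun v ↦ ?_, fun v hv ↦ ?_⟩, ?_⟩
  · by_cases hv : v ∈ N.verts
    · simp [hv, hmem hv, ← (hτ _ (hmem hv)).2 v (hτ v hv).1.symm]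
    · simp [hv]
  · by_cases hvN : v ∈ N.verts
    · simpa [hvN] using N.adj_sub (hτ v hvN).1
    · simp [hvN] at hv
  · ext v
    by_cases hv : v ∈ N.verts
    · simp [hv, (N.adj_sub (hτ v hv).1).ne']
    · simp [hv]

theorem exists_isMatchingInvolution_ncard_eq [Finite V] (G : SimpleGraph V) :
    ∃ σ, IsMatchingInvolution G σ ∧ {v | σ v ≠ v}.ncard = 2 * matchingNumber G := by
  have hne : {k | ∃ N : G.Subgraph, N.IsMatching ∧ N.edgeSet.ncard = k}.Nonempty :=
    ⟨_, ⊥, fun _ h ↦ h.elim, rfl⟩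
  obtain ⟨N, hN, hcard⟩ := Nat.sSup_mem hne (bddAbove_ncard_edgeSet G)
  obtain ⟨σ, hσ, hverts⟩ := exists_isMatchingInvolution_of_isMatching hN
  exact ⟨σ, hσ, by rw [hverts, ← two_mul_ncard_edgeSet hN, hcard, matchingNumber]⟩

theorem two_mul_matchingNumber_le_add_ncard [Finite V] {S T : Set V}
    (hG : ∀ a b, G.Adj a b → a ∈ S ∧ b ∈ S ∨ a ∈ T ∧ b ∈ T) :
    2 * matchingNumber G ≤ 2 * matchingNumber (G.induce S) + T.ncard := by
  obtain ⟨σ, hσ, hcard⟩ := exists_isMatchingInvolution_ncard_eq G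
  have hsub : {v | σ v ≠ v} ⊆ Subtype.val '' {v | restrictInvolution σ S v ≠ v} ∪ T := by
    intro v hv
    rcases hG _ _ (hσ.adj_of_ne v hv) with ⟨hvS, hσS⟩ | ⟨hvT, -⟩
    · refine Or.inl ⟨⟨v, hvS⟩, ?_, rfl⟩
      simpa [restrictInvolution, hσS] using hv
    · exact Or.inr hvT
  calc 2 * matchingNumber G
      = {v | σ v ≠ v}.ncard := hcard.symm
    _ ≤ _ := Set.ncard_le_ncard hsub
    _ ≤ _ := Set.ncard_union_le _ _
    _ = {v | restrictInvolution σ S v ≠ v}.ncard + T.ncard := by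
      rw [Set.ncard_image_of_injective _ Subtype.val_injective]
    _ ≤ 2 * matchingNumber (G.induce S) + T.ncard := Nat.add_le_add_right (hσ.induce S).ncard_le _

end Matching

section EvenCycle

variable {G : SimpleGraph V} {σ τ : V → V}

theorem even_ncard_of_isMatchingInvolution [Finite V] (hσ : IsMatchingInvolution G σ) {S : Set V}
    (hS : ∀ v ∈ S, σ v ∈ S) (hne : ∀ v, σ v ≠ v) : Even S.ncard := by
  obtain ⟨N, hN, hverts⟩ := (hσ.induce S).exists_isMatching
  have huniv : N.verts = Set.univ := by
    rw [hverts, Set.eq_univ_iff_forall]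
    intro v
    simp [restrictInvolution, hS v v.2, Subtype.ext_iff, hne]
  rw [← Nat.card_coe_set_eq, ← Set.ncard_univ, ← huniv, ← two_mul_ncard_edgeSet hN]
  exact even_two_mul _

/-- The graph of the edges lying in exactly one of the matchings encoded by the involutions `σ`
and `τ`. -/
def symmDiffGraph (hσ : Function.Involutive σ) (hτ : Function.Involutive τ) : SimpleGraph V where
  Adj a b := a ≠ b ∧ (σ a = b ∧ τ a ≠ b ∨ τ a = b ∧ σ a ≠ b)
  symm := ⟨fun a b ⟨hab, h⟩ ↦ ⟨hab.symm, by
    rwa [ne_eq, ne_eq, hσ.eq_iff, hτ.eq_iff, eq_comm (a := b), eq_comm (a := b)]⟩⟩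

theorem symmDiffGraph_le (hσ : IsMatchingInvolution G σ) (hτ : IsMatchingInvolution G τ) :
    symmDiffGraph hσ.involutive hτ.involutive ≤ G := by
  rintro a b ⟨hab, ⟨rfl, -⟩ | ⟨rfl, -⟩⟩
  · exact hσ.adj_of_ne a hab.symm
  · exact hτ.adj_of_ne a hab.symm

theorem neighborSet_symmDiffGraph (hσ : Function.Involutive σ) (hτ : Function.Involutive τ)
    (hneσ : ∀ v, σ v ≠ v) (hneτ : ∀ v, τ v ≠ v) {v : V} (hv : σ v ≠ τ v) :
    (symmDiffGraph hσ hτ).neighborSet v = {σ v, τ v} := by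
  ext b
  constructor
  · rintro ⟨-, ⟨rfl, -⟩ | ⟨rfl, -⟩⟩
    · exact Or.inl rfl
    · exact Or.inr rfl
  · rintro (rfl | rfl)
    · exact ⟨(hneσ v).symm, Or.inl ⟨rfl, hv.symm⟩⟩
    · exact ⟨(hneτ v).symm, Or.inr ⟨rfl, hv⟩⟩

theorem ne_of_symmDiffGraph_adj (hσ : Function.Involutive σ) (hτ : Function.Involutive τ) {a b : V}
    (hab : (symmDiffGraph hσ hτ).Adj a b) : σ a ≠ τ a := by
  rcases hab.2 with ⟨rfl, h⟩ | ⟨rfl, h⟩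
  · exact h.symm
  · exact h

theorem isCycles_symmDiffGraph (hσ : Function.Involutive σ) (hτ : Function.Involutive τ)
    (hneσ : ∀ v, σ v ≠ v) (hneτ : ∀ v, τ v ≠ v) : (symmDiffGraph hσ hτ).IsCycles := by
  rintro v ⟨b, hb⟩
  have hv := ne_of_symmDiffGraph_adj hσ hτ hb
  rw [neighborSet_symmDiffGraph hσ hτ hneσ hneτ hv, Set.ncard_pair hv]

theorem exists_even_isCycleSubgraph_of_ne [Finite V] (hσ : IsMatchingInvolution G σ)
    (hτ : IsMatchingInvolution G τ) (hneσ : ∀ v, σ v ≠ v) (hneτ : ∀ v, τ v ≠ v) (hστ : σ ≠ τ) :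
    ∃ C : G.Subgraph, IsCycleSubgraph C ∧ Even C.verts.ncard := by
  obtain ⟨u, hu⟩ := Function.ne_iff.1 hστ
  have := Fintype.ofFinite V
  let K := symmDiffGraph hσ.involutive hτ.involutive
  have hKG : K ≤ G := symmDiffGraph_le hσ hτ
  have hK : K.IsCycles := isCycles_symmDiffGraph hσ.involutive hτ.involutive hneσ hneτ
  have hnbr {v : V} (hv : σ v ≠ τ v) : K.neighborSet v = {σ v, τ v} :=
    neighborSet_symmDiffGraph hσ.involutive hτ.involutive hneσ hneτ hv
  obtain ⟨p, hp, -⟩ := hK.exists_cycle_toSubgraph_verts_eq_connectedComponentSupp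
    (c := K.connectedComponentMk u) rfl (hnbr hu ▸ Set.insert_nonempty _ _)
  have hclosed : ∀ v ∈ p.toSubgraph.verts, σ v ∈ p.toSubgraph.verts := by
    intro v hv
    obtain ⟨b, hb⟩ := Set.nonempty_of_ncard_ne_zero
      (by rw [(isCycleSubgraph_toSubgraph hp).2 v hv]; decide)
    have hσv : σ v ∈ K.neighborSet v := by
      rw [hnbr (ne_of_symmDiffGraph_adj hσ.involutive hτ.involutive (p.toSubgraph.adj_sub hb))]
      exact Or.inl rfl
    exact p.toSubgraph.edge_vert ((hp.adj_toSubgraph_iff_of_isCycles hK hv _).2 hσv).symm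
  refine ⟨(p.mapLe hKG).toSubgraph, isCycleSubgraph_toSubgraph (hp.mapLe hKG), ?_⟩
  rw [show (p.mapLe hKG).toSubgraph.verts = p.toSubgraph.verts by ext v; simp]
  exact even_ncard_of_isMatchingInvolution hσ hclosed hneσ

end EvenCycle

section Determinant

variable {n R : Type*} [Fintype n] [DecidableEq n] [CommRing R] [CharP R 2]

theorem det_eq_sum_prod_of_charP_two (A : Matrix n n R) :
    A.det = ∑ p : Equiv.Perm n, ∏ i, A (p i) i := by
  rw [Matrix.det_apply']
  refine Finset.sum_congr rfl fun p _ ↦ ?_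
  rcases Int.units_eq_one_or (Equiv.Perm.sign p) with h | h <;> simp [h, CharTwo.neg_eq]

theorem det_eq_sum_involutive_of_isSymm {A : Matrix n n R} (hA : A.IsSymm) :
    A.det = ∑ p : Equiv.Perm n with p⁻¹ = p, ∏ i, A (p i) i := by
  have hinv (p : Equiv.Perm n) : ∏ i, A (p⁻¹ i) i = ∏ i, A (p i) i := by
    rw [← Equiv.prod_comp p]
    exact Finset.prod_congr rfl fun i _ ↦ by
      rw [Equiv.Perm.inv_def, Equiv.symm_apply_apply, hA.apply]
  -- Non-involutive permutations cancel in pairs `p`, `p⁻¹`.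
  rw [det_eq_sum_prod_of_charP_two, ← Finset.sum_filter_add_sum_filter_not _ fun p ↦ p⁻¹ = p,
    add_eq_left]
  refine Finset.sum_involution (fun p _ ↦ p⁻¹) (fun p _ ↦ ?_) (fun p hp _ ↦ ?_) (fun p hp ↦ ?_)
    fun p _ ↦ inv_inv p
  · rw [hinv, CharTwo.add_self_eq_zero]
  · exact (Finset.mem_filter.1 hp).2
  · simpa [eq_comm] using hp

theorem det_adjMatrix_eq_one [Fintype V] [DecidableEq V] {R : Type*} [CommRing R] [CharP R 2]
    {G : SimpleGraph V} {σ : V → V} (hσ : IsMatchingInvolution G σ) (hne : ∀ v, σ v ≠ v)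
    (huniq : ∀ τ, IsMatchingInvolution G τ → (∀ v, τ v ≠ v) → τ = σ) :
    (G.adjMatrix R).det = 1 := by
  rw [det_eq_sum_involutive_of_isSymm (G.isSymm_adjMatrix),
    Finset.sum_eq_single_of_mem (hσ.involutive.toPerm σ)]
  · exact Finset.prod_eq_one fun v _ ↦ by simp [(hσ.adj_of_ne v (hne v)).symm]
  · exact Finset.mem_filter.2 ⟨Finset.mem_univ _, Equiv.ext fun _ ↦ rfl⟩
  · intro p hp hpσ
    by_contra hprod
    have hadj (v : V) : G.Adj v (p v) := by
      by_contra h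
      exact hprod (Finset.prod_eq_zero (Finset.mem_univ v) (by simp [G.adj_comm, h]))
    have hpp : Function.Involutive p := fun v ↦
      Equiv.Perm.eq_inv_iff_eq.1 (congrArg (· v) (Finset.mem_filter.1 hp).2).symm
    exact hpσ (Equiv.coe_fn_injective (huniq p ⟨hpp, fun v _ ↦ hadj v⟩ fun v ↦ (hadj v).ne'))

end Determinant

section RankLowerBound

/-- The Hermitian adjacency matrix over the Gaussian integers, where it can be reduced modulo
`1 + i`. -/
noncomputable def MixedGraph.gaussianMatrix (M : MixedGraph V) : Matrix V V GaussianInt := fun u v ↦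
  if M.arc u v then ⟨0, 1⟩ else if M.arc v u then ⟨0, -1⟩ else if M.graph.Adj u v then 1 else 0

/-- The reduction modulo the prime `1 + i`, which sends `i` to `1`. -/
noncomputable def gaussianMod : GaussianInt →+* ZMod 2 := Zsqrtd.lift ⟨1, by decide⟩

theorem map_gaussianMatrix_toComplex [Fintype V] [DecidableEq V] (M : MixedGraph V) :
    GaussianInt.toComplex.mapMatrix M.gaussianMatrix = M.hMatrix := by
  ext u v
  simp only [RingHom.mapMatrix_apply, Matrix.map_apply, MixedGraph.gaussianMatrix,
    MixedGraph.hMatrix]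
  split_ifs <;> simp [GaussianInt.toComplex_def]

theorem map_gaussianMatrix_gaussianMod [Fintype V] [DecidableEq V] (M : MixedGraph V) :
    gaussianMod.mapMatrix M.gaussianMatrix = M.graph.adjMatrix (ZMod 2) := by
  ext u v
  have huv : M.arc u v → M.graph.Adj u v := M.arc_adj u v
  have hvu : M.arc v u → M.graph.Adj u v := fun h ↦ (M.arc_adj v u h).symm
  simp only [RingHom.mapMatrix_apply, Matrix.map_apply, MixedGraph.gaussianMatrix,
    SimpleGraph.adjMatrix_apply]
  split_ifs <;> simp_all [gaussianMod]

theorem det_hMatrix_ne_zero [Fintype V] [DecidableEq V] (M : MixedGraph V) {σ : V → V}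
    (hσ : IsMatchingInvolution M.graph σ) (hne : ∀ v, σ v ≠ v)
    (hodd : ∀ C : M.graph.Subgraph, IsCycleSubgraph C → ¬ Even C.verts.ncard) :
    M.hMatrix.det ≠ 0 := by
  have huniq (τ) (hτ : IsMatchingInvolution M.graph τ) (hneτ : ∀ v, τ v ≠ v) : τ = σ := by
    by_contra hτσ
    obtain ⟨C, hC, heven⟩ := exists_even_isCycleSubgraph_of_ne hτ hσ hneτ hne hτσ
    exact hodd C hC heven
  have hmod : gaussianMod M.gaussianMatrix.det = 1 := by
    rw [RingHom.map_det, map_gaussianMatrix_gaussianMod, det_adjMatrix_eq_one hσ hne huniq]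
  intro hdet
  rw [← map_gaussianMatrix_toComplex, ← RingHom.map_det, GaussianInt.toComplex_eq_zero] at hdet
  simp [hdet] at hmod

theorem ncard_le_hRank [Fintype V] [DecidableEq V] (M : MixedGraph V) {σ : V → V}
    (hσ : IsMatchingInvolution M.graph σ) {S : Set V} (hS : ∀ v ∈ S, σ v ∈ S)
    (hne : ∀ v ∈ S, σ v ≠ v)
    (hodd : ∀ C : M.graph.Subgraph, IsCycleSubgraph C → C.verts ⊆ S → ¬ Even C.verts.ncard) :
    S.ncard ≤ M.hRank := by
  let f := SimpleGraph.Embedding.induce (G := M.graph) S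
  have hdet : (M.induce S).hMatrix.det ≠ 0 := by
    refine det_hMatrix_ne_zero (M.induce S) (hσ.induce S) (fun v ↦ ?_) fun C hC heven ↦ ?_
    · simpa [restrictInvolution, hS v v.2, Subtype.ext_iff] using hne v v.2
    · refine hodd (C.map f.toHom) ((isCycleSubgraph_map_iff f C).2 hC) ?_
        ((ncard_verts_map f C).symm ▸ heven)
      rintro _ ⟨v, -, rfl⟩
      exact v.2
  have hunit : IsUnit (M.induce S).hMatrix := by
    rwa [Matrix.isUnit_iff_isUnit_det, isUnit_iff_ne_zero]
  calc S.ncard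
      = (M.induce S).hMatrix.rank := by
        rw [Matrix.rank_of_isUnit _ hunit, ← Nat.card_eq_fintype_card, Nat.card_coe_set_eq]
    _ ≤ M.hRank := M.hMatrix.rank_submatrix_le Subtype.val Subtype.val

theorem exists_hitting_set_ncard_le {ι α : Type*} [Finite ι] (s : ι → Set α)
    (hs : ∀ i, (s i).Nonempty) :
    ∃ t : Set α, t.ncard ≤ Nat.card ι ∧ ∀ i, ∃ a ∈ s i, a ∈ t := by
  choose a ha using hs
  exact ⟨Set.range a, (Nat.card_coe_set_eq _).symm.trans_le
    (Finite.card_range_le a), fun i ↦ ⟨a i, ha i, i, rfl⟩⟩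

theorem exists_hitting_set_even_cycles [Finite V] (G : SimpleGraph V) :
    ∃ D : Set V, D.ncard ≤ evenCycleCount G ∧
      ∀ C : G.Subgraph, IsCycleSubgraph C → Even C.verts.ncard → ¬ C.verts ⊆ Dᶜ := by
  let ι := {C : G.Subgraph // IsCycleSubgraph C ∧ Even C.verts.ncard}
  obtain ⟨D, hD, hmeet⟩ := exists_hitting_set_ncard_le (fun C : ι ↦ C.1.verts)
    fun C ↦ C.2.1.1.nonempty
  refine ⟨D, hD.trans_eq (Nat.card_coe_set_eq _), fun C hC heven hsub ↦ ?_⟩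
  obtain ⟨v, hv, hvD⟩ := hmeet ⟨C, hC, heven⟩
  exact hsub hv hvD

theorem two_mul_matchingNumber_le_hRank_add [Fintype V] [DecidableEq V] (M : MixedGraph V) :
    2 * matchingNumber M.graph ≤ M.hRank + 2 * evenCycleCount M.graph := by
  obtain ⟨σ, hσ, hcard⟩ := exists_isMatchingInvolution_ncard_eq M.graph
  obtain ⟨D, hD, hodd⟩ := exists_hitting_set_even_cycles M.graph
  let S := {v | σ v ≠ v} \ (D ∪ σ '' D)
  have hS : S.ncard ≤ M.hRank := by
    refine ncard_le_hRank M hσ (fun v hv ↦ ?_) (fun v hv ↦ hv.1) fun C hC hCS heven ↦ ?_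
    · have hmem : v ∉ D ∧ σ v ∉ D :=
        ⟨fun h ↦ hv.2 (Or.inl h), fun h ↦ hv.2 (Or.inr ⟨σ v, h, hσ.involutive v⟩)⟩
      refine ⟨fun h ↦ hv.1 (hσ.involutive.injective h), ?_⟩
      rintro (h | ⟨d, hd, hdv⟩)
      · exact hmem.2 h
      · exact hmem.1 (hσ.involutive.injective hdv ▸ hd)
    · exact hodd C hC heven fun v hv hvD ↦ (hCS hv).2 (Or.inl hvD)
  have hDσ : (D ∪ σ '' D).ncard ≤ 2 * D.ncard :=
    calc (D ∪ σ '' D).ncard ≤ D.ncard + (σ '' D).ncard := Set.ncard_union_le _ _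
      _ = 2 * D.ncard := by rw [Set.ncard_image_of_injective _ hσ.involutive.injective, two_mul]
  have hle := Set.ncard_le_ncard_sdiff_add_ncard {v | σ v ≠ v} (D ∪ σ '' D)
  change _ ≤ S.ncard + _ at hle
  omega

end RankLowerBound

section HangingCycleRank

variable {F : Type*} [Field F] {G : SimpleGraph V} {x : V} {w : G.Walk x x}

theorem exists_eq_getVert {α : Type*} (hw : w.IsCycle) (g : remainder w → α) (ψ : ℕ → α)
    (hzero : ψ 0 = g ⟨x, base_mem_remainder⟩) (hlen : ψ w.length = g ⟨x, base_mem_remainder⟩) :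
    ∃ f : V → α, (∀ s : remainder w, f s = g s) ∧ ∀ i ≤ w.length, f (w.getVert i) = ψ i := by
  choose! idx hpos hlt hidx using fun v ↦ exists_getVert_eq_of_notMem_remainder (w := w) (v := v)
  let f (v : V) : α := if h : v ∈ remainder w then g ⟨v, h⟩ else ψ (idx v)
  have hf (s : remainder w) : f s = g s := dif_pos s.2
  refine ⟨f, hf, fun i hi ↦ ?_⟩
  rcases i.eq_zero_or_pos with rfl | hpos'
  · rw [w.getVert_zero, hzero, ← hf]
  rcases hi.eq_or_lt with rfl | hlt'
  · rw [w.getVert_length, hlen, ← hf]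
  have hv := getVert_notMem_remainder hw hpos' hlt'
  have hi : idx (w.getVert i) = i :=
    hw.getVert_injOn ⟨hpos _ hv, (hlt _ hv).le⟩ ⟨hpos', hlt'.le⟩ (hidx _ hv)
  exact (dif_neg hv).trans (congrArg ψ hi)

theorem card_add_one_eq [Finite V] (hw : w.IsCycle) :
    Nat.card V + 1 = w.length + Nat.card (remainder w) := by
  have hcompl : (remainder w)ᶜ = w.toSubgraph.verts \ {x} := by
    rw [Set.compl_union, compl_compl, Set.sdiff_eq]
  have hdiff := Set.ncard_sdiff_singleton_add_one
    (w.mem_verts_toSubgraph.2 w.start_mem_support) (Set.toFinite _)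
  rw [← hcompl, ncard_verts_toSubgraph hw] at hdiff
  rw [Nat.card_coe_set_eq, ← Set.ncard_add_ncard_compl (remainder w), ← hdiff]
  omega

theorem eq_base_of_adj_notMem_remainder {a b : V} (hab : w.toSubgraph.Adj a b)
    (ha : a ∈ remainder w) : a = x :=
  ha.resolve_left fun h ↦ h (w.toSubgraph.edge_vert hab)

/-- The matrix `A` has weight `c` forwards and `-c` backwards along the cycle `w`, and its other
nonzero entries lie in the `remainder`. -/
structure IsSkewAlong (A : Matrix V V F) (c : F) (w : G.Walk x x) : Prop where
  isCycle : w.IsCycle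
  adj_or_mem : ∀ a b, A a b ≠ 0 → w.toSubgraph.Adj a b ∨ a ∈ remainder w ∧ b ∈ remainder w
  apply_succ : ∀ i < w.length, A (w.getVert i) (w.getVert (i + 1)) = c
  succ_apply : ∀ i < w.length, A (w.getVert (i + 1)) (w.getVert i) = -c

/-- The block of a matrix indexed by the `remainder`. -/
abbrev remainderBlock (w : G.Walk x x) (A : Matrix V V F) : Matrix (remainder w) (remainder w) F :=
  A.submatrix Subtype.val Subtype.val

namespace IsSkewAlong

variable [Fintype V] {A : Matrix V V F} {c : F}

theorem mulVec_getVert (hA : IsSkewAlong A c w) (f : V → F) {i : ℕ} (hi : 0 < i)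
    (hiq : i < w.length) :
    A.mulVec f (w.getVert i) = c * (f (w.getVert (i + 1)) - f (w.getVert (i - 1))) := by
  have hne : w.getVert (i - 1) ≠ w.getVert (i + 1) :=
    hA.isCycle.getVert_sub_one_ne_getVert_add_one hiq.le
  have hprev := hA.succ_apply (i - 1) (by omega)
  rw [Nat.sub_add_cancel hi] at hprev
  rw [Matrix.mulVec, dotProduct, Fintype.sum_eq_add _ _ hne fun b hb ↦ ?_, hprev,
    hA.apply_succ i hiq]
  · ring
  · by_contra h
    have hmem : b ∈ w.toSubgraph.neighborSet (w.getVert i) :=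
      (hA.adj_or_mem _ _ (left_ne_zero_of_mul h)).resolve_right fun h ↦
        getVert_notMem_remainder hA.isCycle hi hiq h.1
    rw [hA.isCycle.neighborSet_toSubgraph_internal hi.ne' hiq] at hmem
    exact hmem.elim hb.1 hb.2

theorem sum_notMem_remainder_eq_zero (hA : IsSkewAlong A c w) {f : V → F}
    (hf : f (w.getVert 1) = f (w.getVert (w.length - 1))) (s : remainder w) :
    ∑ u : {u // u ∉ remainder w}, A s u * f u = 0 := by
  have hlen := hA.isCycle.three_le_length
  have hadj (u : {u // u ∉ remainder w}) (hu : A s u ≠ 0) : w.toSubgraph.Adj s u :=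
    (hA.adj_or_mem _ _ hu).resolve_right fun h ↦ u.2 h.2
  by_cases hs : (s : V) = x
  · have hfwd := hA.apply_succ 0 (by omega)
    have hbwd := hA.succ_apply (w.length - 1) (by omega)
    rw [w.getVert_zero] at hfwd
    rw [Nat.sub_add_cancel (by omega), w.getVert_length] at hbwd
    rw [hs] at hadj ⊢
    rw [Fintype.sum_eq_add ⟨w.getVert 1, getVert_notMem_remainder hA.isCycle one_pos (by omega)⟩
      ⟨w.getVert (w.length - 1),
        getVert_notMem_remainder hA.isCycle (by omega) (by omega)⟩ ?_ fun u hu ↦ ?_]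
    · rw [hfwd, hbwd, hf]
      ring
    · intro h
      have := hA.isCycle.getVert_injOn ⟨le_rfl, by omega⟩ ⟨by omega, by omega⟩
        (congrArg Subtype.val h)
      omega
    · by_contra h
      have hmem : u.1 ∈ w.toSubgraph.neighborSet x := hadj u (left_ne_zero_of_mul h)
      rw [hA.isCycle.neighborSet_toSubgraph_endpoint] at hmem
      exact hmem.elim (fun h ↦ hu.1 (Subtype.ext h)) fun h ↦ hu.2 (Subtype.ext h)
  · refine Finset.sum_eq_zero fun u _ ↦ ?_
    by_contra h
    exact hs (eq_base_of_adj_notMem_remainder (hadj u (left_ne_zero_of_mul h)) s.2)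

theorem mulVec_coe (hA : IsSkewAlong A c w) {f : V → F}
    (hf : f (w.getVert 1) = f (w.getVert (w.length - 1))) (s : remainder w) :
    A.mulVec f s = (remainderBlock w A).mulVec (fun t : remainder w ↦ f t) s := by
  rw [Matrix.mulVec, dotProduct, ← Fintype.sum_subtype_add_sum_subtype (· ∈ remainder w),
    hA.sum_notMem_remainder_eq_zero hf, add_zero, Matrix.mulVec, dotProduct]
  congr!

theorem getVert_eq_of_mulVec_eq_zero (hA : IsSkewAlong A c w) (hc : c ≠ 0) {f : V → F}
    (hf : A.mulVec f = 0) {i : ℕ} (hi : i < w.length) :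
    f (w.getVert i) = (if Even i then f x else f (w.getVert 1)) ∧
      f (w.getVert (i + 1)) = if Even (i + 1) then f x else f (w.getVert 1) := by
  induction i with
  | zero => simp
  | succ i ih =>
    refine ⟨(ih (by omega)).2, ?_⟩
    have hrow := hA.mulVec_getVert f i.succ_pos hi
    rw [hf, Pi.zero_apply, eq_comm, mul_eq_zero_iff_left hc, sub_eq_zero] at hrow
    rw [hrow, Nat.succ_sub_one, (ih (by omega)).1]
    simp only [Nat.even_add_one, not_not]

theorem mulVec_eq_zero_iff (hA : IsSkewAlong A c w) (hc : c ≠ 0) (heven : Even w.length)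
    (f : V → F) :
    A.mulVec f = 0 ↔
      (remainderBlock w A).mulVec (fun t : remainder w ↦ f t) = 0 ∧
      ∀ i ≤ w.length, f (w.getVert i) = if Even i then f x else f (w.getVert 1) := by
  have hlen := hA.isCycle.three_le_length
  have hends (h : ∀ i ≤ w.length, f (w.getVert i) = if Even i then f x else f (w.getVert 1)) :
      f (w.getVert 1) = f (w.getVert (w.length - 1)) := by
    rw [h (w.length - 1) (by omega), if_neg]
    rw [Nat.not_even_iff_odd]
    exact Nat.Even.sub_odd (by omega) heven odd_one
  constructor
  · intro hf
    have hall (i : ℕ) (hi : i ≤ w.length) :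
        f (w.getVert i) = if Even i then f x else f (w.getVert 1) := by
      cases i with
      | zero => simp
      | succ i => exact (hA.getVert_eq_of_mulVec_eq_zero hc hf hi).2
    refine ⟨funext fun s ↦ ?_, hall⟩
    rw [← hA.mulVec_coe (hends hall), hf]
    rfl
  · rintro ⟨hB, hall⟩
    ext v
    by_cases hv : v ∈ remainder w
    · rw [hA.mulVec_coe (hends hall) ⟨v, hv⟩, hB]
      rfl
    · obtain ⟨i, hi, hiq, rfl⟩ := exists_getVert_eq_of_notMem_remainder hv
      obtain ⟨j, rfl⟩ := Nat.exists_eq_add_one.2 hi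
      rw [hA.mulVec_getVert f hi hiq, Nat.add_sub_cancel, hall _ hiq, hall j (by omega)]
      simp [Nat.even_add_one]

theorem finrank_ker_eq (hA : IsSkewAlong A c w) (hc : c ≠ 0) (heven : Even w.length) :
    Module.finrank F A.mulVecLin.ker =
      Module.finrank F (remainderBlock w A).mulVecLin.ker + 1 := by
  let restr : A.mulVecLin.ker →ₗ[F] (remainderBlock w A).mulVecLin.ker :=
    (LinearMap.funLeft F F (Subtype.val : remainder w → V)).restrict
      fun f hf ↦ ((hA.mulVec_eq_zero_iff hc heven f).1 hf).1
  let e : A.mulVecLin.ker →ₗ[F] (remainderBlock w A).mulVecLin.ker × F :=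
    restr.prod (LinearMap.proj (w.getVert 1) ∘ₗ Submodule.subtype _)
  have hinj : Function.Injective e := by
    refine (injective_iff_map_eq_zero e).2 fun ⟨f, hf⟩ h ↦ Subtype.ext (funext fun v ↦ ?_)
    have hS (s : remainder w) : f s = 0 := congrFun (congrArg (fun p ↦ p.1.1) h) s
    have hone : f (w.getVert 1) = 0 := congrArg Prod.snd h
    by_cases hv : v ∈ remainder w
    · exact hS ⟨v, hv⟩
    · obtain ⟨i, -, hi, rfl⟩ := exists_getVert_eq_of_notMem_remainder hv
      have hi := ((hA.mulVec_eq_zero_iff hc heven f).1 hf).2 i hi.le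
      rwa [hone, hS ⟨x, base_mem_remainder⟩, ite_self] at hi
  have hsurj : Function.Surjective e := by
    rintro ⟨⟨g, hg⟩, t⟩
    have hlen := hA.isCycle.three_le_length
    obtain ⟨f, hfS, hfw⟩ := exists_eq_getVert hA.isCycle g
      (fun i ↦ if Even i then g ⟨x, base_mem_remainder⟩ else t) (by simp) (by simp [heven])
    have hx : f x = g ⟨x, base_mem_remainder⟩ := hfS ⟨x, base_mem_remainder⟩
    have hone : f (w.getVert 1) = t := by simp [hfw 1 (by omega)]
    have hf : A.mulVec f = 0 := by
      refine (hA.mulVec_eq_zero_iff hc heven f).2 ⟨?_, fun i hi ↦ by rw [hfw i hi, hx, hone]⟩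
      rwa [funext hfS]
    exact ⟨⟨f, hf⟩, Prod.ext (Subtype.ext (funext hfS)) hone⟩
  rw [(LinearEquiv.ofBijective e ⟨hinj, hsurj⟩).finrank_eq, Module.finrank_prod,
    Module.finrank_self]

theorem rank_add_two_eq (hA : IsSkewAlong A c w) (hc : c ≠ 0) (heven : Even w.length) :
    A.rank + 2 = w.length + (remainderBlock w A).rank := by
  have hV := A.mulVecLin.finrank_range_add_finrank_ker
  have hS := (remainderBlock w A).mulVecLin.finrank_range_add_finrank_ker
  have hcard := card_add_one_eq hA.isCycle
  rw [Module.finrank_fintype_fun_eq_card, ← Nat.card_eq_fintype_card] at hV hS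
  have hker := hA.finrank_ker_eq hc heven
  unfold Matrix.rank
  omega

end IsSkewAlong

theorem apply_ne_zero_of_toSubgraph_adj {A : Matrix V V F} {c : F} (hc : c ≠ 0)
    (hmul : ∀ a b, w.toSubgraph.Adj a b → A a b * A b a = -c ^ 2) {a b : V}
    (hab : w.toSubgraph.Adj a b) : A a b ≠ 0 :=
  left_ne_zero_of_mul (by rw [hmul a b hab]; exact neg_ne_zero.2 (pow_ne_zero 2 hc))

theorem exists_isSkewAlong_conj {A : Matrix V V F} {c : F} (hw : w.IsCycle) (hc : c ≠ 0)
    (hsupp : ∀ a b, A a b ≠ 0 → w.toSubgraph.Adj a b ∨ a ∈ remainder w ∧ b ∈ remainder w)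
    (hmul : ∀ a b, w.toSubgraph.Adj a b → A a b * A b a = -c ^ 2)
    (hprod : ∏ i ∈ Finset.range w.length, A (w.getVert i) (w.getVert (i + 1)) = c ^ w.length) :
    ∃ φ : V → F, (∀ v, φ v ≠ 0) ∧ (∀ v ∈ remainder w, φ v = 1) ∧
      IsSkewAlong (Matrix.of fun a b ↦ (φ a)⁻¹ * A a b * φ b) c w := by
  let a (i : ℕ) : F := A (w.getVert i) (w.getVert (i + 1))
  let ψ (i : ℕ) : F := ∏ k ∈ Finset.range i, c / a k
  have hadj {i : ℕ} (hi : i < w.length) :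
      w.toSubgraph.Adj (w.getVert i) (w.getVert (i + 1)) :=
    w.toSubgraph_adj_getVert hi
  have ha {i : ℕ} (hi : i < w.length) : a i ≠ 0 :=
    apply_ne_zero_of_toSubgraph_adj hc hmul (hadj hi)
  have hψ {i : ℕ} (hi : i ≤ w.length) : ψ i ≠ 0 := Finset.prod_ne_zero_iff.2 fun k hk ↦
    div_ne_zero hc (ha ((Finset.mem_range.1 hk).trans_le hi))
  have hψlen : ψ w.length = 1 := by
    rw [show ψ w.length = _ from Finset.prod_div_distrib .., hprod, Finset.prod_const,
      Finset.card_range, div_self (pow_ne_zero _ hc)]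
  have hψsucc (i : ℕ) : ψ (i + 1) = ψ i * (c / a i) := Finset.prod_range_succ _ _
  obtain ⟨φ, hφS, hφw⟩ := exists_eq_getVert hw (fun _ ↦ (1 : F)) ψ (Finset.prod_range_zero _) hψlen
  refine ⟨φ, fun v ↦ ?_, fun v hv ↦ hφS ⟨v, hv⟩, hw, fun u v huv ↦ ?_, fun i hi ↦ ?_,
    fun i hi ↦ ?_⟩
  · by_cases hv : v ∈ remainder w
    · rw [hφS ⟨v, hv⟩]
      exact one_ne_zero
    · obtain ⟨i, -, hi, rfl⟩ := exists_getVert_eq_of_notMem_remainder hv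
      exact hφw i hi.le ▸ hψ hi.le
  · exact hsupp u v (right_ne_zero_of_mul (left_ne_zero_of_mul huv))
  · rw [Matrix.of_apply, hφw i hi.le, hφw (i + 1) hi, hψsucc]
    have := hψ hi.le
    have := ha hi
    field_simp
    rfl
  · have hback : A (w.getVert (i + 1)) (w.getVert i) = -c ^ 2 / a i :=
      eq_div_of_mul_eq (ha hi) ((mul_comm _ _).trans (hmul _ _ (hadj hi)))
    rw [Matrix.of_apply, hφw i hi.le, hφw (i + 1) hi, hψsucc, hback]
    have := hψ hi.le
    have := ha hi
    field_simp

theorem rank_conj [Fintype V] {φ : V → F} (hφ : ∀ v, φ v ≠ 0) (A : Matrix V V F) :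
    (Matrix.of fun a b ↦ (φ a)⁻¹ * A a b * φ b).rank = A.rank := by
  have hdiag : (Matrix.of fun a b ↦ (φ a)⁻¹ * A a b * φ b) =
      Matrix.diagonal (fun v ↦ (φ v)⁻¹) * A * Matrix.diagonal φ := by
    ext a b
    rw [Matrix.mul_diagonal, Matrix.diagonal_mul, Matrix.of_apply]
  have hunit {d : V → F} (hd : ∀ v, d v ≠ 0) : IsUnit (Matrix.diagonal d).det := by
    rw [Matrix.det_diagonal, isUnit_iff_ne_zero]
    exact Finset.prod_ne_zero_iff.2 fun v _ ↦ hd v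
  rw [hdiag, Matrix.rank_mul_eq_left_of_isUnit_det _ _ (hunit hφ),
    Matrix.rank_mul_eq_right_of_isUnit_det _ _ (hunit fun v ↦ inv_ne_zero (hφ v))]

theorem rank_add_two_eq_of_prod_eq [Fintype V] {A : Matrix V V F} {c : F} (hw : w.IsCycle)
    (hc : c ≠ 0) (heven : Even w.length)
    (hsupp : ∀ a b, A a b ≠ 0 → w.toSubgraph.Adj a b ∨ a ∈ remainder w ∧ b ∈ remainder w)
    (hmul : ∀ a b, w.toSubgraph.Adj a b → A a b * A b a = -c ^ 2)
    (hprod : ∏ i ∈ Finset.range w.length, A (w.getVert i) (w.getVert (i + 1)) = c ^ w.length) :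
    A.rank + 2 = w.length + (remainderBlock w A).rank := by
  obtain ⟨φ, hφ, hφone, hskew⟩ := exists_isSkewAlong_conj hw hc hsupp hmul hprod
  have hblock : remainderBlock w (Matrix.of fun a b ↦ (φ a)⁻¹ * A a b * φ b) =
      remainderBlock w A := by
    ext s t
    simp [hφone s s.2, hφone t t.2]
  rw [← rank_conj hφ A, hskew.rank_add_two_eq hc heven, hblock]

end HangingCycleRank

section HermitianAdjacency

open Complex

theorem prod_map_darts {G : SimpleGraph V} {R : Type*} [CommMonoid R] (g : V → V → R) {a b : V}
    (w : G.Walk a b) :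
    (w.darts.map fun d ↦ g d.fst d.snd).prod =
      ∏ i ∈ Finset.range w.length, g (w.getVert i) (w.getVert (i + 1)) := by
  induction w with
  | nil => simp
  | cons h p ih =>
    rw [SimpleGraph.Walk.darts_cons, List.map_cons, List.prod_cons,
      SimpleGraph.Walk.length_cons, Finset.prod_range_succ', ih, mul_comm]
    simp

variable [Fintype V] [DecidableEq V] (M : MixedGraph V)

theorem adj_of_hMatrix_ne_zero {a b : V} (hab : M.hMatrix a b ≠ 0) : M.graph.Adj a b := by
  unfold MixedGraph.hMatrix at hab
  split_ifs at hab with hfwd hbwd hadj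
  · exact M.arc_adj a b hfwd
  · exact (M.arc_adj b a hbwd).symm
  · exact hadj
  · exact absurd rfl hab

theorem hMatrix_mul_hMatrix_symm {a b : V} (hab : M.graph.Adj a b) :
    M.hMatrix a b * M.hMatrix b a = 1 := by
  have hanti := M.arc_antisymm a b
  by_cases hfwd : M.arc a b
  · simp [MixedGraph.hMatrix, hfwd, hanti hfwd]
  · by_cases hbwd : M.arc b a <;> simp [MixedGraph.hMatrix, hfwd, hbwd, hab, hab.symm]

theorem prod_map_hMatrix (l : List M.graph.Dart) :
    (l.map fun d ↦ M.hMatrix d.fst d.snd).prod =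
      I ^ (l.countP fun d ↦ M.arc d.fst d.snd) * (-I) ^ (l.countP fun d ↦ M.arc d.snd d.fst) := by
  induction l with
  | nil => simp
  | cons d l ih =>
    have hanti := M.arc_antisymm d.fst d.snd
    rw [List.map_cons, List.prod_cons, ih, List.countP_cons, List.countP_cons]
    by_cases hfwd : M.arc d.fst d.snd
    · have hentry : M.hMatrix d.fst d.snd = I := by simp [MixedGraph.hMatrix, hfwd]
      rw [hentry, if_pos hfwd, if_neg (by simp [hanti hfwd])]
      ring
    · by_cases hbwd : M.arc d.snd d.fst
      · have hentry : M.hMatrix d.fst d.snd = -I := by simp [MixedGraph.hMatrix, hfwd, hbwd]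
        rw [hentry, if_neg hfwd, if_pos hbwd]
        ring
      · simp [MixedGraph.hMatrix, hfwd, hbwd, d.adj]

theorem I_pow_mul_neg_I_pow {f b q : ℕ} (hq : Even q)
    (h : ((f : ℤ) - (b : ℤ)).natAbs % 4 = q % 4) : I ^ f * (-I) ^ b = I ^ q := by
  obtain ⟨k, rfl⟩ := hq
  rw [← I_pow_three, ← pow_mul, ← pow_add, I_pow_eq_pow_mod, I_pow_eq_pow_mod (k + k)]
  congr 1
  omega

theorem prod_map_hMatrix_darts {u : V} (w : M.graph.Walk u u) {q : ℕ} (hq : Even q)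
    (hsig : walkSignature M w % 4 = q % 4) :
    (w.darts.map fun d ↦ M.hMatrix d.fst d.snd).prod = I ^ q := by
  rw [prod_map_hMatrix, I_pow_mul_neg_I_pow hq hsig]

theorem exists_isCycle_prod_eq {C : M.graph.Subgraph} {x : V} (hx : x ∈ C.verts)
    (heven : Even C.verts.ncard) (hsig : CycleSig M C fun s ↦ s % 4 = C.verts.ncard % 4) :
    ∃ w : M.graph.Walk x x, w.IsCycle ∧ w.toSubgraph = C ∧
      ∏ i ∈ Finset.range w.length, M.hMatrix (w.getVert i) (w.getVert (i + 1)) =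
        I ^ C.verts.ncard := by
  obtain ⟨u, w, hw, hverts, hedges, hsig⟩ := hsig
  have hxw : x ∈ w.support := hverts.ge hx
  refine ⟨w.rotate x hxw, hw.rotate hxw, ?_, ?_⟩
  · rw [w.toSubgraph_rotate]
    refine SimpleGraph.Subgraph.ext (w.verts_toSubgraph.trans hverts) ?_
    ext a b
    rw [← SimpleGraph.Subgraph.mem_edgeSet, ← SimpleGraph.Subgraph.mem_edgeSet, ← hedges]
    exact w.mem_edges_toSubgraph
  · rw [← prod_map_darts fun a b ↦ M.hMatrix a b, ((w.rotate_darts x hxw).perm.map _).prod_eq,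
      prod_map_hMatrix_darts M w heven hsig]

theorem hRank_add_two_eq {x : V} {w : M.graph.Walk x x} (hw : IsHangingCycle w)
    (heven : Even w.length)
    (hprod : ∏ i ∈ Finset.range w.length, M.hMatrix (w.getVert i) (w.getVert (i + 1)) =
      I ^ w.length) :
    M.hRank + 2 = w.length + (M.induce (remainder w)).hRank := by
  refine (rank_add_two_eq_of_prod_eq hw.isCycle I_ne_zero heven (fun a b hab ↦ ?_)
    (fun a b hab ↦ ?_) hprod).trans ?_
  · exact hw.toSubgraph_adj_or_mem_remainder (adj_of_hMatrix_ne_zero M hab)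
  · rw [hMatrix_mul_hMatrix_symm M (w.toSubgraph.adj_sub hab), I_sq, neg_neg]
  · rw [MixedGraph.hRank]
    congr!

end HermitianAdjacency

theorem pendant_even_cycle_reduction_general
    {V : Type u} [Fintype V] [DecidableEq V] (M : MixedGraph V)
    (C : M.graph.Subgraph) (x : V) (hx : x ∈ C.verts)
    (hdeg : ∀ v ∈ C.verts, v ≠ x → {w | M.graph.Adj v w}.ncard = 2)
    (heven : Even C.verts.ncard)
    (hsig : CycleSig M C (fun s => s % 4 = C.verts.ncard % 4))
    (hr : (M.hRank : ℤ) =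
      2 * (matchingNumber M.graph : ℤ) - 2 * (evenCycleCount M.graph : ℤ) + 1) :
    ((M.induce (C.vertsᶜ ∪ {x})).hRank : ℤ) =
      2 * (matchingNumber (M.induce (C.vertsᶜ ∪ {x})).graph : ℤ) -
        2 * (evenCycleCount (M.induce (C.vertsᶜ ∪ {x})).graph : ℤ) + 1 := by
  obtain ⟨w, hw, rfl, hprod⟩ := exists_isCycle_prod_eq M hx heven hsig
  have hlen := ncard_verts_toSubgraph hw
  rw [hlen] at heven hprod
  have hang : IsHangingCycle w := ⟨hw, hdeg⟩
  let H := M.induce (remainder w)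
  have hrank : M.hRank + 2 = w.length + H.hRank := hRank_add_two_eq M hang heven hprod
  have hcycles : evenCycleCount M.graph = evenCycleCount H.graph + 1 :=
    hang.evenCycleCount_eq heven
  have hmatching : 2 * matchingNumber M.graph ≤
      2 * matchingNumber H.graph + w.toSubgraph.verts.ncard :=
    two_mul_matchingNumber_le_add_ncard fun a b hab ↦
      (hang.toSubgraph_adj_or_mem_remainder hab).symm.imp_right fun h ↦
        ⟨w.toSubgraph.edge_vert h, w.toSubgraph.edge_vert h.symm⟩
  have hlower : 2 * matchingNumber H.graph ≤ H.hRank + 2 * evenCycleCount H.graph :=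
    two_mul_matchingNumber_le_hRank_add H
  change (H.hRank : ℤ) = 2 * (matchingNumber H.graph : ℤ) - 2 * (evenCycleCount H.graph : ℤ) + 1
  obtain ⟨k, hk⟩ := heven
  omega

/-- Let G̃ have pairwise vertex-disjoint cycles, no pendant
vertices, and a pendant even cycle C̃_q with σ(C̃_q) ≡ q (mod 4), with unique
degree-3 vertex x on C_q; let H̃ = G̃ − V(C_q) + x. If r(G̃) = 2m(G) − 2κ(G) + 1,
then r(H̃) = 2m(H) − 2κ(H) + 1. -/
theorem pendant_even_cycle_reduction
    {V : Type u} [Fintype V] [DecidableEq V] (M : MixedGraph V)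
    (hdisj : CyclesVertexDisjoint M.graph) (hnp : NoPendantVerts M.graph)
    (C : M.graph.Subgraph) (x : V) (hpc : IsPendantCycle M.graph C x)
    (heven : Even C.verts.ncard)
    (hsig : CycleSig M C (fun s => s % 4 = C.verts.ncard % 4))
    (hr : (M.hRank : ℤ) =
      2 * (matchingNumber M.graph : ℤ) - 2 * (evenCycleCount M.graph : ℤ) + 1) :
    ((M.induce (C.vertsᶜ ∪ {x})).hRank : ℤ) =
      2 * (matchingNumber (M.induce (C.vertsᶜ ∪ {x})).graph : ℤ) -
        2 * (evenCycleCount (M.induce (C.vertsᶜ ∪ {x})).graph : ℤ) + 1 :=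
  pendant_even_cycle_reduction_general M C x hpc.2.1 hpc.2.2.2 heven hsig hr

end MixedPaper
end

section
/- Let G~ be a mixed graph whose cycles are pairwise vertex-disjoint and whose underlying graph G contains no odd cycles. Then r(G~) ≠ 2m(G) − 2κ(G) + 1. -/
open scoped Classical

namespace MixedPaper

universe u

variable {V : Type u}

/-! The `H`-rank of a mixed graph without odd cycles is even, while `2m(G) - 2κ(G) + 1` is odd.
Indeed, the underlying graph is bipartite, so in a suitable ordering of the vertices the Hermitian
adjacency matrix is `[[0, B], [Bᴴ, 0]]`, whose rank is `rank B + rank Bᴴ = 2 rank B`. -/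

section BipartiteGraphs

open SimpleGraph

variable {G : SimpleGraph V} {u v : V}

theorem even_length_add_one_of_isPath_of_adj
    (hG : ∀ (x : V) (c : G.Walk x x), c.IsCycle → Even c.length)
    {p : G.Walk v u} (hp : p.IsPath) (h : G.Adj u v) : Even (p.length + 1) := by
  by_cases huv : s(u, v) ∈ p.edges
  · rw [hp.length_eq_one_of_mem_edges (Sym2.eq_swap ▸ huv)]
    exact even_two
  · exact hG u (.cons h p) ((Walk.cons_isCycle_iff p h).2 ⟨hp, huv⟩)

/- Each detour cut out by `bypass` is an edge followed by a path back to its start, hence even. -/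
theorem even_length_add_length_bypass [DecidableEq V]
    (hG : ∀ (x : V) (c : G.Walk x x), c.IsCycle → Even c.length)
    (p : G.Walk u v) : Even (p.length + p.bypass.length) := by
  induction p with
  | nil => simp [Walk.bypass]
  | @cons u _ _ h p ih =>
    rw [Walk.bypass, Walk.length_cons]
    split_ifs with hu
    · have hdetour : Even ((p.bypass.takeUntil u hu).length + 1) :=
        even_length_add_one_of_isPath_of_adj hG (p.bypass_isPath.takeUntil hu) h
      have hsplit := congrArg Walk.length (p.bypass.take_spec hu)
      rw [Walk.length_append] at hsplit
      grind
    · rw [Walk.length_cons]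
      grind

theorem isBipartite_iff_forall_isCycle_even_length :
    G.IsBipartite ↔ ∀ (x : V) (c : G.Walk x x), c.IsCycle → Even c.length := by
  refine two_colorable_iff_forall_loop_even.trans ⟨fun hG x c _ ↦ hG x c, fun hG x p ↦ ?_⟩
  have hp := even_length_add_length_bypass hG p
  rwa [(Walk.isPath_iff_nil.1 p.bypass_isPath).length_eq_zero, add_zero] at hp

theorem isCycleSubgraph_toSubgraph_s19 {c : G.Walk u u} (hc : c.IsCycle) :
    IsCycleSubgraph c.toSubgraph :=
  ⟨c.toSubgraph_connected, fun _ hv ↦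
    hc.ncard_neighborSet_toSubgraph_eq_two (c.mem_verts_toSubgraph.1 hv)⟩

theorem ncard_verts_toSubgraph_of_isCycle {c : G.Walk u u} (hc : c.IsCycle) :
    c.toSubgraph.verts.ncard = c.length := by
  have hverts : c.toSubgraph.verts = (c.support.tail.toFinset : Set V) := by
    ext v
    rw [c.mem_verts_toSubgraph, List.coe_toFinset, Set.mem_ofPred_eq, c.mem_support_iff,
      or_iff_right_of_imp]
    rintro rfl
    exact c.end_mem_tail_support hc.not_nil
  rw [hverts, Set.ncard_coe_finset, List.toFinset_card_of_nodup hc.support_nodup, List.length_tail,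
    c.length_support, Nat.add_sub_cancel]

theorem isBipartite_of_forall_isCycleSubgraph_not_odd
    (hG : ∀ C : G.Subgraph, IsCycleSubgraph C → ¬ Odd C.verts.ncard) : G.IsBipartite :=
  isBipartite_iff_forall_isCycle_even_length.2 fun _ c hc ↦ by
    rw [← Nat.not_odd_iff_even, ← ncard_verts_toSubgraph_of_isCycle hc]
    exact hG _ (isCycleSubgraph_toSubgraph_s19 hc)

end BipartiteGraphs

section BlockMatrices

open Matrix

variable {K : Type*} [Field K]

theorem finrank_submodule_prod {E F : Type*} [AddCommGroup E] [Module K E] [FiniteDimensional K E]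
    [AddCommGroup F] [Module K F] [FiniteDimensional K F] (p : Submodule K E)
    (q : Submodule K F) :
    Module.finrank K (p.prod q) = Module.finrank K p + Module.finrank K q := by
  have hinj : Function.Injective (p.subtype.prodMap q.subtype) :=
    p.subtype_injective.prodMap q.subtype_injective
  rw [← Module.finrank_prod, ← LinearMap.finrank_range_of_inj hinj, LinearMap.range_prodMap,
    p.range_subtype, q.range_subtype]

theorem rank_fromBlocks_zero₁₁_zero₂₂ {m n o p : Type*}
    [Finite m] [Finite n] [Fintype o] [Fintype p]
    (B : Matrix m p K) (C : Matrix n o K) :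
    (fromBlocks 0 B C 0).rank = B.rank + C.rank := by
  let e := LinearEquiv.sumArrowLequivProdArrow m n K K
  let f := LinearEquiv.sumArrowLequivProdArrow o p K K ≪≫ₗ LinearEquiv.prodComm K _ _
  have hconj : (fromBlocks 0 B C 0).mulVecLin =
      e.symm.toLinearMap ∘ₗ B.mulVecLin.prodMap C.mulVecLin ∘ₗ f.toLinearMap := by
    refine LinearMap.ext fun x ↦ ?_
    rw [mulVecLin_apply, fromBlocks_mulVec, zero_mulVec, zero_mulVec, zero_add, add_zero]
    rfl
  have hrange : (fromBlocks 0 B C 0).mulVecLin.range =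
      (B.mulVecLin.range.prod C.mulVecLin.range).map e.symm.toLinearMap := by
    rw [hconj, LinearMap.range_comp, LinearMap.range_comp_of_range_eq_top _ f.range,
      LinearMap.range_prodMap]
  rw [rank, hrange, LinearEquiv.finrank_map_eq, finrank_submodule_prod, rank, rank]

theorem even_rank_of_isHermitian_of_bipartite [PartialOrder K] [StarRing K] [StarOrderedRing K]
    {n : Type*} [Fintype n] {H : Matrix n n K} (hH : H.IsHermitian) (s : Set n)
    (hs : ∀ i j, (i ∈ s ↔ j ∈ s) → H i j = 0) : Even H.rank := by
  let e := Equiv.Set.sumCompl s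
  let B : Matrix s ↑sᶜ K := H.submatrix (↑) (↑)
  have hblocks : H.submatrix e e = fromBlocks 0 B Bᴴ 0 := by
    ext (i | i) (j | j)
    · exact hs _ _ (iff_of_true i.2 j.2)
    · rfl
    · exact (hH.apply _ _).symm
    · exact hs _ _ (iff_of_false i.2 j.2)
  rw [← H.rank_submatrix e e, hblocks, rank_fromBlocks_zero₁₁_zero₂₂, rank_conjTranspose]
  exact ⟨_, rfl⟩

end BlockMatrices

section HRank

variable [Fintype V] [DecidableEq V] (M : MixedGraph V)

theorem MixedGraph.isHermitian_hMatrix : M.hMatrix.IsHermitian := by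
  ext u v
  have := M.arc_antisymm u v
  by_cases huv : M.arc u v <;> by_cases hvu : M.arc v u <;>
    simp_all [MixedGraph.hMatrix, M.graph.adj_comm u v]

variable {M}

theorem MixedGraph.hMatrix_apply_eq_zero {u v : V} (h : ¬ M.graph.Adj u v) :
    M.hMatrix u v = 0 := by
  have huv : ¬ M.arc u v := fun ha ↦ h (M.arc_adj u v ha)
  have hvu : ¬ M.arc v u := fun ha ↦ h (M.arc_adj v u ha).symm
  simp [MixedGraph.hMatrix, h, huv, hvu]

open scoped ComplexOrder in
theorem MixedGraph.even_hRank (hM : M.graph.IsBipartite) : Even M.hRank := by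
  obtain ⟨s, t, hst⟩ := hM.exists_isBipartiteWith
  refine even_rank_of_isHermitian_of_bipartite M.isHermitian_hMatrix s fun u v huv ↦
    hMatrix_apply_eq_zero fun hadj ↦ ?_
  have := hst.disjoint.notMem_of_mem_left (a := u)
  have := hst.disjoint.notMem_of_mem_left (a := v)
  have := hst.mem_of_adj hadj
  tauto

end HRank

theorem hRank_ne_lower_bound_add_one_of_no_odd_cycles_general
    {V : Type u} [Fintype V] [DecidableEq V] (M : MixedGraph V)
    (hno : ∀ C : M.graph.Subgraph, IsCycleSubgraph C → ¬ Odd C.verts.ncard) :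
    (M.hRank : ℤ) ≠
      2 * (matchingNumber M.graph : ℤ) - 2 * (evenCycleCount M.graph : ℤ) + 1 := by
  obtain ⟨k, hk⟩ : Even M.hRank :=
    MixedGraph.even_hRank (isBipartite_of_forall_isCycleSubgraph_not_odd hno)
  omega

/-- Let G̃ be a mixed graph with pairwise vertex-disjoint cycles
whose underlying graph contains no odd cycles. Then r(G̃) ≠ 2m(G) − 2κ(G) + 1. -/
theorem hRank_ne_lower_bound_add_one_of_no_odd_cycles
    {V : Type u} [Fintype V] [DecidableEq V] (M : MixedGraph V)
    (hdisj : CyclesVertexDisjoint M.graph)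
    (hno : ∀ C : M.graph.Subgraph, IsCycleSubgraph C → ¬ Odd C.verts.ncard) :
    (M.hRank : ℤ) ≠
      2 * (matchingNumber M.graph : ℤ) - 2 * (evenCycleCount M.graph : ℤ) + 1 :=
  hRank_ne_lower_bound_add_one_of_no_odd_cycles_general M hno

end MixedPaper
end
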